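/- Let G be a graph, ω an end of G, and G' an induced subgraph of G with finite vertex-boundary such that some end ω' of G' contains rays of ω. Then the relative degree of ω' in G' equals the relative degree of ω in G. -/

import Mathlib

open scoped ENNReal

namespace Paper

variable {V : Type*} {W : Type*}

/-- Reachability in `G` by a walk avoiding the vertex set `S`. -/
def ReachAvoid (G : SimpleGraph V) (S : Set V) (u v : V) : Prop :=
  ∃ p : G.Walk u v, ∀ x ∈ p.support, x ∉ S

/-- A ray (one-way infinite path) in `G`. -/
structure IsRay (G : SimpleGraph V) (f : ℕ → V) : Prop where
  inj : Function.Injective f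
  adj : ∀ n, G.Adj (f n) (f (n + 1))

/-- Two rays are equivalent (belong to the same end) if no finite vertex set
separates them: for every finite `S` some vertex of the first ray can be joined
to some vertex of the second by a walk avoiding `S`. -/
def EquivRay (G : SimpleGraph V) (f g : ℕ → V) : Prop :=
  ∀ S : Set V, S.Finite → ∃ m n, ReachAvoid G S (f m) (g n)

/-- The set of ends of `G`: rays modulo equivalence. -/
def Ends (G : SimpleGraph V) :=
  Quot (fun f g : {f : ℕ → V // IsRay G f} => EquivRay G f.1 g.1)

/-- `v` dominates the ray `f`: there are infinitely many `v`–`V(f)` paths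
pairwise disjoint except in `v`. -/
def DominatesRay (G : SimpleGraph V) (v : V) (f : ℕ → V) : Prop :=
  ∃ (g : ℕ → ℕ) (p : ∀ n, G.Walk v (f (g n))),
    Function.Injective g ∧ (∀ n, (p n).IsPath) ∧
    ∀ m n, m ≠ n → ∀ x ∈ (p m).support, x ∈ (p n).support → x = v

/-- The set of vertices dominating the end of the ray `r`. -/
def Dom (G : SimpleGraph V) (r : ℕ → V) : Set V := {v | DominatesRay G v r}

/-- Vertex-boundary of the vertex set `A`. -/
def vBoundary (G : SimpleGraph V) (A : Set V) : Set V :=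
  {x | x ∈ A ∧ ∃ y, y ∉ A ∧ G.Adj x y}

/-- Edge-boundary of the vertex set `A`. -/
def eBoundary (G : SimpleGraph V) (A : Set V) : Set (Sym2 V) :=
  {e | ∃ x y, x ∈ A ∧ y ∉ A ∧ G.Adj x y ∧ e = s(x, y)}

/-- `S` is a `V'`–`Ω(A)` separator: `V' ⊄ S` and no component of `G - S`
contains both a vertex of `V'` and (the tail of) a ray lying in `A`. -/
def SepVertsEndsIn (G : SimpleGraph V) (V' S A : Set V) : Prop :=
  ¬ V' ⊆ S ∧ ∀ v ∈ V', ∀ f : ℕ → V, IsRay G f → Set.range f ⊆ A →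
    ∀ n, (∀ m, n ≤ m → f m ∉ S) → ¬ ReachAvoid G S v (f n)

/-- `S` is an inclusion-minimal `V'`–`Ω(A)` separator. -/
def MinSepVertsEndsIn (G : SimpleGraph V) (V' S A : Set V) : Prop :=
  SepVertsEndsIn G V' S A ∧ ∀ S' ⊂ S, ¬ SepVertsEndsIn G V' S' A

/-- The graph `G_ω`: `G` minus the dominating vertices of the end of `r`. -/
def Gmin (G : SimpleGraph V) (r : ℕ → V) : SimpleGraph ((Dom G r)ᶜ : Set V) :=
  G.induce ((Dom G r)ᶜ : Set V)

/-- A ray of `G_ω` belonging to (the unique end `ω̂` induced by) the end `ω` of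
the ray `r`. -/
def InDeletedEnd (G : SimpleGraph V) (r : ℕ → V)
    (f : ℕ → ((Dom G r)ᶜ : Set V)) : Prop :=
  IsRay (Gmin G r) f ∧ EquivRay G (fun n => (f n : V)) r

/-- An `ω̂`-region of `G_ω`: induced connected, finite vertex-boundary,
containing a ray of `ω̂`. -/
def IsOmegaRegion (G : SimpleGraph V) (r : ℕ → V)
    (A : Set ((Dom G r)ᶜ : Set V)) : Prop :=
  ((Gmin G r).induce A).Connected ∧ (vBoundary (Gmin G r) A).Finite ∧
    ∃ f, InDeletedEnd G r f ∧ Set.range f ⊆ A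

/-- `(Ĥ_i) → ω̂` : a sequence of distinct nested `ω̂`-regions whose
vertex-boundaries are minimal separators. -/
def Converges (G : SimpleGraph V) (r : ℕ → V)
    (A : ℕ → Set ((Dom G r)ᶜ : Set V)) : Prop :=
  Function.Injective A ∧ (∀ i, IsOmegaRegion G r (A i)) ∧
    (∀ i, A (i + 1) ⊆ A i \ vBoundary (Gmin G r) (A i)) ∧
    (∀ i, MinSepVertsEndsIn (Gmin G r) (vBoundary (Gmin G r) (A i))
      (vBoundary (Gmin G r) (A (i + 1))) (A (i + 1)))

/-- The ratio `|∂_e A| / |∂_v A|`, as an extended nonnegative real. -/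
noncomputable def bratio (G : SimpleGraph V) (A : Set V) : ℝ≥0∞ :=
  ((eBoundary G A).encard : ℝ≥0∞) / ((vBoundary G A).encard : ℝ≥0∞)

open Classical in
/-- The relative degree `d_{e/v}` of the end of the ray `r`. -/
noncomputable def relDegree (G : SimpleGraph V) (r : ℕ → V) : ℝ≥0∞ :=
  if (Dom G r).Infinite ∨ ¬ ∃ f, InDeletedEnd G r f then
    ((Dom G r).encard : ℝ≥0∞)
  else
    ((Dom G r).encard : ℝ≥0∞) +
      ⨅ A : {A : ℕ → Set ((Dom G r)ᶜ : Set V) // Converges G r A},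
        Filter.atTop.liminf fun i => bratio (Gmin G r) (A.1 i)

/-- The degree of a vertex, as an extended real. -/
noncomputable def degER (G : SimpleGraph V) (v : V) : EReal :=
  (((G.neighborSet v).encard : ℝ≥0∞) : EReal)

/-- A subdivision of `K_k` in `G` with branching vertices `b 0, …, b (k-1)`. -/
def HasTKOn (G : SimpleGraph V) {k : ℕ} (b : Fin k ↪ V) : Prop :=
  ∃ p : ∀ i j : Fin k, G.Walk (b i) (b j),
    (∀ i j, i ≠ j → (p i j).IsPath) ∧
    (∀ i j, i ≠ j → ∀ x ∈ (p i j).support, x ∈ Set.range b → x = b i ∨ x = b j) ∧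
    (∀ i j i' j', i ≠ j → i' ≠ j' → s(i, j) ≠ s(i', j') →
      ∀ x ∈ (p i j).support, x ∈ (p i' j').support → x ∈ Set.range b)

/-- `K_k` is a topological minor of `G`. -/
def HasTopK (G : SimpleGraph V) (k : ℕ) : Prop :=
  ∃ b : Fin k ↪ V, HasTKOn G b

/-- A subdivision of `K_{ℵ₀}` in `G` with branching vertices `b 0, b 1, …`. -/
def HasTKInfOn (G : SimpleGraph V) (b : ℕ ↪ V) : Prop :=
  ∃ p : ∀ i j : ℕ, G.Walk (b i) (b j),
    (∀ i j, i ≠ j → (p i j).IsPath) ∧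
    (∀ i j, i ≠ j → ∀ x ∈ (p i j).support, x ∈ Set.range b → x = b i ∨ x = b j) ∧
    (∀ i j i' j', i ≠ j → i' ≠ j' → s(i, j) ≠ s(i', j') →
      ∀ x ∈ (p i j).support, x ∈ (p i' j').support → x ∈ Set.range b)

/-- `K_k` is a minor of `G` (with finite branch sets). -/
def HasKMinor (G : SimpleGraph V) (k : ℕ) : Prop :=
  ∃ B : Fin k → Finset V,
    (∀ i, (B i).Nonempty) ∧ (∀ i j, i ≠ j → Disjoint (B i) (B j)) ∧
    (∀ i, (G.induce (B i : Set V)).Connected) ∧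
    (∀ i j, i ≠ j → ∃ x ∈ B i, ∃ y ∈ B j, G.Adj x y)

/-- The average degree of the finite induced subgraph of `G` on `s`. -/
noncomputable def avgDegOn (G : SimpleGraph V) (s : Finset V) : ℝ :=
  (∑ v ∈ s, ((G.neighborSet v ∩ ↑s).ncard : ℝ)) / s.card

/-- `G` is rayless. -/
def Rayless (G : SimpleGraph V) : Prop := ¬ ∃ f : ℕ → V, IsRay G f

/-- The average degree of the vertex set `F` into `A` in `G`. -/
noncomputable def avgDegIn (G : SimpleGraph V) (A F : Set V) : ℝ :=
  (∑ᶠ v ∈ F, ((G.neighborSet v ∩ A).ncard : ℝ)) / F.ncard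

/-! ### Walk helpers -/

theorem walk_stays (G : SimpleGraph V) (A : Set V) {u v : V} (p : G.Walk u v) (hu : u ∈ A)
    (hp : ∀ x ∈ p.support, x ∉ vBoundary G A) : ∀ x ∈ p.support, x ∈ A := by
  induction p with
  | nil => intro x hx; simp at hx; exact hx ▸ hu
  | @cons a b c h q ih =>
    have hb : b ∈ A := by
      by_contra hb
      exact hp a (by simp) ⟨hu, b, hb, h⟩
    intro x hx
    rw [SimpleGraph.Walk.support_cons, List.mem_cons] at hx
    rcases hx with rfl | hx
    · exact hu
    · exact ih hb (fun y hy => hp y (by simp [hy])) x hx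

theorem walk_stays' (G : SimpleGraph V) (A : Set V) {u v : V} (p : G.Walk u v) (hv : v ∈ A)
    (hp : ∀ x ∈ p.support, x ∉ vBoundary G A) : ∀ x ∈ p.support, x ∈ A := by
  have := walk_stays G A p.reverse hv (by simpa using hp)
  simpa using this

theorem walk_last_entry (G : SimpleGraph V) (A : Set V) {u v : V} (p : G.Walk u v) (hv : v ∈ A) :
    (∀ x ∈ p.support, x ∈ A) ∨ ∃ w ∈ vBoundary G A, ∃ q : G.Walk w v,
      (∀ x ∈ q.support, x ∈ p.support) ∧ ∀ x ∈ q.support, x ∈ A := by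
  induction p with
  | nil => left; intro x hx; simp at hx; exact hx ▸ hv
  | @cons a b c h q ih =>
    rcases ih hv with h1 | ⟨w, hw, q', h1, h2⟩
    · by_cases ha : a ∈ A
      · left
        intro x hx
        rw [SimpleGraph.Walk.support_cons, List.mem_cons] at hx
        rcases hx with rfl | hx
        · exact ha
        · exact h1 x hx
      · right
        exact ⟨b, ⟨h1 b (by simp), a, ha, h.symm⟩, q, fun x hx => by simp [hx], h1⟩
    · right
      exact ⟨w, hw, q', fun x hx => by simp [h1 x hx], h2⟩

theorem ReachAvoid.trans {G : SimpleGraph V} {S : Set V} {a b c : V}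
    (h : ReachAvoid G S a b) (h' : ReachAvoid G S b c) : ReachAvoid G S a c := by
  obtain ⟨p, hp⟩ := h
  obtain ⟨q, hq⟩ := h'
  refine ⟨p.append q, fun x hx => ?_⟩
  rw [SimpleGraph.Walk.mem_support_append_iff] at hx
  exact hx.elim (hp x) (hq x)

theorem ReachAvoid.symm {G : SimpleGraph V} {S : Set V} {a b : V}
    (h : ReachAvoid G S a b) : ReachAvoid G S b a := by
  obtain ⟨p, hp⟩ := h
  exact ⟨p.reverse, by simpa using hp⟩

theorem ReachAvoid.mono {G : SimpleGraph V} {S T : Set V} {a b : V} (hST : S ⊆ T)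
    (h : ReachAvoid G T a b) : ReachAvoid G S a b := by
  obtain ⟨p, hp⟩ := h
  exact ⟨p, fun x hx hS => hp x hx (hST hS)⟩

theorem ReachAvoid.map {H' : SimpleGraph W} {H : SimpleGraph V} (φ : H' ↪g H) {S : Set V} {a b : W}
    (h : ReachAvoid H' (φ ⁻¹' S) a b) : ReachAvoid H S (φ a) (φ b) := by
  obtain ⟨p, hp⟩ := h
  refine ⟨p.map φ.toHom, fun x hx => ?_⟩
  rw [SimpleGraph.Walk.support_map, List.mem_map] at hx
  obtain ⟨y, hy, rfl⟩ := hx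
  exact hp y hy

theorem reach_comap {H' : SimpleGraph W} {H : SimpleGraph V} (φ : H' ↪g H) {S : Set V} {x y : V}
    (p : H.Walk x y) (hr : ∀ z ∈ p.support, z ∈ Set.range φ) (hS : ∀ z ∈ p.support, z ∉ S) :
    ∀ u v, φ u = x → φ v = y → ReachAvoid H' (φ ⁻¹' S) u v := by
  induction p with
  | @nil a =>
    rintro u v hu hv
    obtain rfl : u = v := φ.injective (hu.trans hv.symm)
    refine ⟨SimpleGraph.Walk.nil, fun z hz => ?_⟩
    simp at hz
    subst hz
    have := hS a (by simp)
    simpa [hu] using this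
  | @cons a b c h q ih =>
    rintro u v rfl rfl
    obtain ⟨w, rfl⟩ := hr b (by simp)
    have h1 := ih (fun z hz => hr z (by simp [hz])) (fun z hz => hS z (by simp [hz])) w v rfl rfl
    obtain ⟨q', hq'⟩ := h1
    refine ⟨SimpleGraph.Walk.cons (φ.map_adj_iff.1 h) q', fun z hz => ?_⟩
    rw [SimpleGraph.Walk.support_cons, List.mem_cons] at hz
    rcases hz with rfl | hz
    · exact hS _ (by simp)
    · exact hq' z hz

/-! ### Rays -/

theorem IsRay.eventually_avoid {G : SimpleGraph V} {f : ℕ → V} (hf : IsRay G f) {S : Set V}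
    (hS : S.Finite) : ∃ N, ∀ m, N ≤ m → f m ∉ S := by
  have h : (f ⁻¹' S).Finite := hS.preimage hf.inj.injOn
  obtain ⟨N, hN⟩ := h.bddAbove
  exact ⟨N + 1, fun m hm hmS => by have := hN (show m ∈ f ⁻¹' S from hmS); omega⟩

theorem IsRay.reach_le {G : SimpleGraph V} {f : ℕ → V} (hf : IsRay G f) {S : Set V} {N : ℕ}
    (hN : ∀ m, N ≤ m → f m ∉ S) {a b : ℕ} (ha : N ≤ a) (hab : a ≤ b) :
    ReachAvoid G S (f a) (f b) := by
  induction b, hab using Nat.le_induction with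
  | base => exact ⟨SimpleGraph.Walk.nil, by simpa using hN a ha⟩
  | succ b hb ih =>
    refine ih.trans ⟨SimpleGraph.Walk.cons (hf.adj b) SimpleGraph.Walk.nil, ?_⟩
    intro x hx
    simp at hx
    rcases hx with rfl | rfl
    · exact hN _ (by omega)
    · exact hN _ (by omega)

theorem IsRay.reach {G : SimpleGraph V} {f : ℕ → V} (hf : IsRay G f) {S : Set V} {N : ℕ}
    (hN : ∀ m, N ≤ m → f m ∉ S) {a b : ℕ} (ha : N ≤ a) (hb : N ≤ b) :
    ReachAvoid G S (f a) (f b) := by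
  rcases le_total a b with h | h
  · exact hf.reach_le hN ha h
  · exact (hf.reach_le hN hb h).symm

theorem EquivRay.tail {G : SimpleGraph V} {f g : ℕ → V} (h : EquivRay G f g) {S : Set V}
    (hS : S.Finite) (M : ℕ) : ∃ a b, M ≤ a ∧ M ≤ b ∧ ReachAvoid G S (f a) (g b) := by
  obtain ⟨a, b, p, hp⟩ := h (S ∪ (f '' Set.Iio M ∪ g '' Set.Iio M))
    (hS.union (((Set.finite_Iio M).image f).union ((Set.finite_Iio M).image g)))
  refine ⟨a, b, ?_, ?_, p, fun x hx hxS => hp x hx (Or.inl hxS)⟩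
  · by_contra hlt
    exact hp _ p.start_mem_support (Or.inr (Or.inl ⟨a, by simpa using hlt, rfl⟩))
  · by_contra hlt
    exact hp _ p.end_mem_support (Or.inr (Or.inr ⟨b, by simpa using hlt, rfl⟩))

theorem EquivRay.symm {G : SimpleGraph V} {f g : ℕ → V} (h : EquivRay G f g) : EquivRay G g f := by
  intro S hS
  obtain ⟨a, b, hab⟩ := h S hS
  exact ⟨b, a, hab.symm⟩

theorem EquivRay.trans {G : SimpleGraph V} {f g k : ℕ → V} (hg : IsRay G g) (h : EquivRay G f g)
    (h' : EquivRay G g k) : EquivRay G f k := by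
  intro S hS
  obtain ⟨N, hN⟩ := hg.eventually_avoid hS
  obtain ⟨a, b, -, hb, h1⟩ := h.tail hS N
  obtain ⟨c, d, hc, -, h2⟩ := h'.tail hS N
  exact ⟨a, d, (h1.trans (hg.reach hN hb hc)).trans h2⟩

theorem IsRay.shift {G : SimpleGraph V} {f : ℕ → V} (hf : IsRay G f) (k : ℕ) :
    IsRay G (fun n => f (n + k)) :=
  ⟨fun a b h => by have := hf.inj h; omega, fun n => by
    have := hf.adj (n + k)
    rwa [show n + k + 1 = n + 1 + k by omega] at this⟩

theorem EquivRay.shift {G : SimpleGraph V} {f g : ℕ → V} (h : EquivRay G f g) (k : ℕ) :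
    EquivRay G (fun n => f (n + k)) g := by
  intro S hS
  obtain ⟨a, b, ha, -, h1⟩ := h.tail hS k
  exact ⟨a - k, b, by simpa [Nat.sub_add_cancel ha] using h1⟩

theorem IsRay.map {H' : SimpleGraph W} {H : SimpleGraph V} (φ : H' ↪g H) {f : ℕ → W}
    (hf : IsRay H' f) : IsRay H (fun n => φ (f n)) :=
  ⟨fun _ _ h => hf.inj (φ.injective h), fun n => φ.map_adj_iff.2 (hf.adj n)⟩

theorem IsRay.comap {H' : SimpleGraph W} {H : SimpleGraph V} (φ : H' ↪g H) {f : ℕ → W}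
    (hf : IsRay H (fun n => φ (f n))) : IsRay H' f :=
  ⟨fun a b h => hf.inj (by simp [h]), fun n => φ.map_adj_iff.1 (hf.adj n)⟩

/-! ### Domination -/

theorem dominates_iff {G : SimpleGraph V} {f : ℕ → V} {v : V} :
    DominatesRay G v f ↔
      ∀ S : Set V, S.Finite → v ∉ S → ∀ N, ∃ n, N ≤ n ∧ ReachAvoid G S v (f n) := by
  constructor
  · rintro ⟨g, p, hg, -, hd⟩ S hS hv N
    have h1 : {n | g n < N}.Finite := (Set.finite_Iio N).preimage hg.injOn
    have h2 : {n | ∃ x ∈ S, x ∈ (p n).support}.Finite := by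
      have : {n | ∃ x ∈ S, x ∈ (p n).support} = ⋃ x ∈ S, {n | x ∈ (p n).support} := by
        ext n; simp
      rw [this]
      refine hS.biUnion fun x hx => Set.Subsingleton.finite fun a ha b hb => ?_
      by_contra hab
      exact hv (hd a b hab x ha hb ▸ hx)
    obtain ⟨n, hn⟩ := (h1.union h2).exists_notMem
    simp only [Set.mem_union, Set.mem_setOf_eq, not_or, not_lt, not_exists, not_and] at hn
    exact ⟨g n, hn.1, p n, fun x hx hxS => hn.2 x hxS hx⟩
  · intro h
    classical
    obtain ⟨s, -, hs⟩ := exists_seq_of_forall_finset_exists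
      (α := Σ n, G.Path v (f n)) (fun _ => True)
      (fun a b => a.1 < b.1 ∧ ∀ x ∈ a.2.1.support, x ∈ b.2.1.support → x = v) (by
        intro s _
        obtain ⟨n, hn, p, hp⟩ := h ((⋃ a ∈ s, {x | x ∈ a.2.1.support}) \ {v})
          (Set.Finite.diff (s.finite_toSet.biUnion fun a _ => a.2.1.support.finite_toSet))
          (by simp) (s.sup (fun a => a.1 + 1))
        refine ⟨⟨n, p.toPath⟩, trivial, fun a ha => ⟨?_, fun x hx hx' => ?_⟩⟩
        · have := Finset.le_sup (f := fun a : (Σ n, G.Path v (f n)) => a.1 + 1) ha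
          simp only at this ⊢
          omega
        · by_contra hxv
          refine hp x (p.support_bypass_subset hx') ⟨?_, hxv⟩
          simp only [Set.mem_iUnion]
          exact ⟨a, ha, hx⟩)
    have hmono : StrictMono (fun n => (s n).1) := fun a b hab => (hs a b hab).1
    refine ⟨fun n => (s n).1, fun n => (s n).2.1, hmono.injective, fun n => (s n).2.2, ?_⟩
    intro m n hmn x hx hx'
    rcases lt_or_gt_of_ne hmn with h | h
    · exact (hs _ _ h).2 x hx hx'
    · exact (hs _ _ h).2 x hx' hx

theorem dominates_of_equiv {G : SimpleGraph V} {f g : ℕ → V} {v : V} (hf : IsRay G f)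
    (h : EquivRay G f g) (hd : DominatesRay G v f) : DominatesRay G v g := by
  rw [dominates_iff] at hd ⊢
  intro S hS hv M
  obtain ⟨N, hN⟩ := hf.eventually_avoid hS
  obtain ⟨n, hn, h1⟩ := hd S hS hv N
  obtain ⟨a, b, ha, hb, h2⟩ := h.tail hS (max N M)
  exact ⟨b, le_trans (le_max_right _ _) hb,
    (h1.trans (hf.reach hN hn (le_trans (le_max_left _ _) ha))).trans h2⟩

theorem dom_induce {G : SimpleGraph V} {A : Set V} (hb : (vBoundary G A).Finite) {f : ℕ → A} :
    Subtype.val '' Dom (G.induce A) f = Dom G (fun n => (f n : V)) := by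
  classical
  let φ : G.induce A ↪g G := SimpleGraph.Embedding.induce A
  ext v
  constructor
  · rintro ⟨v, hv, rfl⟩
    change DominatesRay (G.induce A) v f at hv
    change DominatesRay G v (fun n => (f n : V))
    rw [dominates_iff] at hv ⊢
    intro S hS hvS N
    obtain ⟨n, hn, h⟩ := hv (φ ⁻¹' S) (hS.preimage φ.injective.injOn) hvS N
    exact ⟨n, hn, h.map φ⟩
  · intro hv
    change DominatesRay G v (fun n => (f n : V)) at hv
    rw [dominates_iff] at hv
    have hvA : v ∈ A := by
      by_contra hvA
      obtain ⟨n, -, p, hp⟩ := hv _ hb (fun h => hvA h.1) 0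
      exact hvA (walk_stays' G A p (f n).2 hp v p.start_mem_support)
    refine ⟨⟨v, hvA⟩, ?_, rfl⟩
    change DominatesRay (G.induce A) ⟨v, hvA⟩ f
    rw [dominates_iff]
    intro S hS hvS N
    obtain ⟨n, hn, p, hp⟩ := hv (φ '' S ∪ (vBoundary G A \ {v})) ((hS.image _).union hb.diff) (by
      rintro (⟨x, hx, h⟩ | h)
      · apply hvS
        have : x = ⟨v, hvA⟩ := Subtype.ext h
        exact this ▸ hx
      · exact h.2 rfl) N
    refine ⟨n, hn, ?_⟩
    have key : ∀ z ∈ p.bypass.support, z ∈ A := by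
      have hpath := p.bypass_isPath
      have hsub : ∀ z ∈ p.bypass.support, z ∉ vBoundary G A \ {v} := fun z hz h =>
        hp z (p.support_bypass_subset hz) (Or.inr h)
      generalize p.bypass = q at hpath hsub
      have hend : (f n : V) ∈ A := (f n).2
      generalize (f n : V) = y at q hend
      cases q with
      | nil => intro z hz; simp at hz; exact hz ▸ hvA
      | cons h q =>
        rw [SimpleGraph.Walk.cons_isPath_iff] at hpath
        intro z hz
        rw [SimpleGraph.Walk.support_cons, List.mem_cons] at hz
        rcases hz with rfl | hz
        · exact hvA
        · refine walk_stays' G A q hend (fun x hx hxB => ?_) z hz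
          refine hsub x (by simp [hx]) ⟨hxB, ?_⟩
          rintro rfl
          exact hpath.2 hx
    have := reach_comap φ (S := φ '' S) p.bypass (fun z hz => ⟨⟨z, key z hz⟩, rfl⟩)
      (fun z hz h => hp z (p.support_bypass_subset hz) (Or.inl h)) ⟨v, hvA⟩ (f n) rfl rfl
    rwa [Set.preimage_image_eq _ φ.injective] at this

theorem image_ssubset_iff' {φ : W → V} (hφ : Function.Injective φ) {S T : Set W} :
    φ '' S ⊂ φ '' T ↔ S ⊂ T := by
  rw [ssubset_iff_subset_not_subset, ssubset_iff_subset_not_subset,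
    Set.image_subset_image_iff hφ, Set.image_subset_image_iff hφ]

/-! ### Abstract convergence -/

/-- Convergence of a sequence of regions, for an abstract class `E` of rays. -/
def Conv (H : SimpleGraph V) (E : (ℕ → V) → Prop) (A : ℕ → Set V) : Prop :=
  Function.Injective A ∧ (∀ i, (H.induce (A i)).Connected ∧ (vBoundary H (A i)).Finite ∧
    ∃ f, E f ∧ Set.range f ⊆ A i) ∧
    (∀ i, A (i + 1) ⊆ A i \ vBoundary H (A i)) ∧
    (∀ i, MinSepVertsEndsIn H (vBoundary H (A i)) (vBoundary H (A (i + 1))) (A (i + 1)))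

theorem converges_iff (G : SimpleGraph V) (r : ℕ → V) (A : ℕ → Set ((Dom G r)ᶜ : Set V)) :
    Converges G r A ↔ Conv (Gmin G r) (InDeletedEnd G r) A := Iff.rfl

theorem Conv.shift {H : SimpleGraph V} {E : (ℕ → V) → Prop} {A : ℕ → Set V} (h : Conv H E A)
    (k : ℕ) : Conv H E (fun i => A (i + k)) := by
  obtain ⟨h1, h2, h3, h4⟩ := h
  refine ⟨fun a b hab => by have := h1 hab; omega, fun i => h2 _, fun i => ?_, fun i => ?_⟩
  · have := h3 (i + k)
    rwa [show i + k + 1 = i + 1 + k by omega] at this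
  · have := h4 (i + k)
    rwa [show i + k + 1 = i + 1 + k by omega] at this

theorem Conv.antitone {H : SimpleGraph V} {E : (ℕ → V) → Prop} {A : ℕ → Set V} (h : Conv H E A) :
    Antitone A :=
  antitone_nat_of_succ_le fun i => (h.2.2.1 i).trans Set.diff_subset

theorem Conv.exists_notMem {H : SimpleGraph V} {E : (ℕ → V) → Prop} {A : ℕ → Set V}
    (h : Conv H E A) (x : V) : ∃ i, x ∉ A i := by
  by_contra! hx
  obtain ⟨y, hy, -⟩ := Set.not_subset.1 (h.2.2.2 0).1.1
  have hy1 : y ∉ A 1 := fun hy1 => (h.2.2.1 0 hy1).2 hy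
  have hD : ∀ z, z ∉ vBoundary H (⋂ i, A i) := by
    rintro z ⟨hz, w, hw, hzw⟩
    simp only [Set.mem_iInter, not_forall] at hz hw
    obtain ⟨j, hj⟩ := hw
    exact (h.2.2.1 j (hz (j + 1))).2 ⟨hz j, w, hj, hzw⟩
  obtain ⟨p⟩ := (h.2.1 0).1.preconnected ⟨x, hx 0⟩ ⟨y, hy.1⟩
  have := walk_stays H (⋂ i, A i) (p.map (SimpleGraph.Embedding.induce (A 0)).toHom)
    (Set.mem_iInter.2 hx) (fun z _ => hD z) _ (SimpleGraph.Walk.end_mem_support _)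
  exact hy1 (Set.mem_iInter.1 this 1)

theorem Conv.eventually_disjoint {H : SimpleGraph V} {E : (ℕ → V) → Prop} {A : ℕ → Set V}
    (h : Conv H E A) {B : Set V} (hB : B.Finite) : ∃ k, ∀ i, Disjoint (A (i + k)) B := by
  choose j hj using h.exists_notMem
  obtain ⟨k, hk⟩ := (hB.image j).bddAbove
  refine ⟨k, fun i => Set.disjoint_left.2 fun x hx hxB => hj x ?_⟩
  exact h.antitone (le_trans (hk ⟨x, hxB, rfl⟩) (Nat.le_add_left k i)) hx

section Transfer

variable {H' : SimpleGraph W} {H : SimpleGraph V} (φ : H' ↪g H)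

theorem vBoundary_image {S : Set W} (hS : Disjoint (φ '' S) (vBoundary H (Set.range φ))) :
    vBoundary H (φ '' S) = φ '' vBoundary H' S := by
  ext x
  constructor
  · rintro ⟨⟨x, hx, rfl⟩, y, hy, hxy⟩
    by_cases hyr : y ∈ Set.range φ
    · obtain ⟨y, rfl⟩ := hyr
      exact ⟨x, ⟨hx, y, fun h => hy ⟨y, h, rfl⟩, φ.map_adj_iff.1 hxy⟩, rfl⟩
    · exact (Set.disjoint_left.1 hS ⟨x, hx, rfl⟩ ⟨⟨x, rfl⟩, y, hyr, hxy⟩).elim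
  · rintro ⟨x, ⟨hx, y, hy, hxy⟩, rfl⟩
    exact ⟨⟨x, hx, rfl⟩, φ y, by rwa [φ.injective.mem_set_image], φ.map_adj_iff.2 hxy⟩

theorem eBoundary_image {S : Set W} (hS : Disjoint (φ '' S) (vBoundary H (Set.range φ))) :
    eBoundary H (φ '' S) = Sym2.map φ '' eBoundary H' S := by
  ext e
  constructor
  · rintro ⟨_, y, ⟨x, hx, rfl⟩, hy, hxy, rfl⟩
    by_cases hyr : y ∈ Set.range φ
    · obtain ⟨y, rfl⟩ := hyr
      exact ⟨s(x, y), ⟨x, y, hx, fun h => hy ⟨y, h, rfl⟩, φ.map_adj_iff.1 hxy, rfl⟩, by simp⟩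
    · exact (Set.disjoint_left.1 hS ⟨x, hx, rfl⟩ ⟨⟨x, rfl⟩, y, hyr, hxy⟩).elim
  · rintro ⟨_, ⟨x, y, hx, hy, hxy, rfl⟩, rfl⟩
    exact ⟨φ x, φ y, ⟨x, hx, rfl⟩, by rwa [φ.injective.mem_set_image], φ.map_adj_iff.2 hxy,
      by simp⟩

theorem bratio_image {S : Set W} (hS : Disjoint (φ '' S) (vBoundary H (Set.range φ))) :
    bratio H (φ '' S) = bratio H' S := by
  unfold bratio
  rw [vBoundary_image φ hS, eBoundary_image φ hS, φ.injective.encard_image,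
    (Sym2.map.injective φ.injective).encard_image]

theorem connected_image (S : Set W) :
    (H.induce (φ '' S)).Connected ↔ (H'.induce S).Connected := by
  let e : H'.induce S ≃g H.induce (φ '' S) :=
    { toEquiv := Equiv.Set.image φ S φ.injective
      map_rel_iff' := by
        intro a b
        exact φ.map_adj_iff (v := a.1) (w := b.1) }
  exact e.connected_iff.symm

theorem sep_image {A₀ A₁ S : Set W} (h₀ : Disjoint (φ '' A₀) (vBoundary H (Set.range φ)))
    (h01 : A₁ ⊆ A₀) :
    SepVertsEndsIn H (φ '' vBoundary H' A₀) (φ '' S) (φ '' A₁) ↔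
      SepVertsEndsIn H' (vBoundary H' A₀) S A₁ := by
  unfold SepVertsEndsIn
  rw [Set.image_subset_image_iff φ.injective]
  refine and_congr_right fun _ => ⟨fun h v hv f hf hfA n hn hr => ?_,
    fun h v hv f hf hfA n hn hr => ?_⟩
  · refine h (φ v) ⟨v, hv, rfl⟩ (fun n => φ (f n)) (hf.map φ) ?_ n ?_ ?_
    · rintro _ ⟨m, rfl⟩
      exact ⟨f m, hfA ⟨m, rfl⟩, rfl⟩
    · intro m hm
      rw [φ.injective.mem_set_image]
      exact hn m hm
    · apply ReachAvoid.map φ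
      rwa [Set.preimage_image_eq _ φ.injective]
  · choose g hg hgf using fun n => hfA ⟨n, rfl⟩
    obtain rfl : (fun n => φ (g n)) = f := funext hgf
    have hn' : ∀ m, n ≤ m → g m ∉ S := fun m hm hm' => hn m hm ⟨_, hm', rfl⟩
    have hgA : Set.range g ⊆ A₁ := by
      rintro _ ⟨m, rfl⟩
      exact hg m
    have hfin : ∀ w ∈ vBoundary H' A₀, ∀ q : H.Walk (φ w) (φ (g n)),
        (∀ x ∈ q.support, x ∈ φ '' A₀) → (∀ x ∈ q.support, x ∉ φ '' S) → False := by
      intro w hw q hq1 hq2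
      have := reach_comap φ q (fun z hz => Set.image_subset_range _ _ (hq1 z hz)) hq2 w (g n)
        rfl rfl
      rw [Set.preimage_image_eq _ φ.injective] at this
      exact h w hw g (hf.comap φ) hgA n hn' this
    obtain ⟨p, hp⟩ := hr
    obtain ⟨v, hv, rfl⟩ := hv
    rcases walk_last_entry H (φ '' A₀) p ⟨g n, h01 (hg n), rfl⟩ with h1 | ⟨w, hw, q, h1, h2⟩
    · exact hfin v hv p h1 hp
    · rw [vBoundary_image φ h₀] at hw
      obtain ⟨w, hw, rfl⟩ := hw
      exact hfin w hw q h2 (fun x hx => hp x (h1 x hx))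

theorem minSep_image {A₀ A₁ S : Set W} (h₀ : Disjoint (φ '' A₀) (vBoundary H (Set.range φ)))
    (h01 : A₁ ⊆ A₀) :
    MinSepVertsEndsIn H (φ '' vBoundary H' A₀) (φ '' S) (φ '' A₁) ↔
      MinSepVertsEndsIn H' (vBoundary H' A₀) S A₁ := by
  unfold MinSepVertsEndsIn
  rw [sep_image φ h₀ h01]
  refine and_congr_right fun _ => ⟨fun h S' hS' => ?_, fun h S' hS' => ?_⟩
  · rw [← sep_image φ h₀ h01]
    exact h _ ((image_ssubset_iff' φ.injective).2 hS')
  · obtain ⟨T, hT, rfl⟩ := Set.subset_image_iff.1 hS'.subset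
    rw [sep_image φ h₀ h01]
    exact h _ ((image_ssubset_iff' φ.injective).1 hS')

theorem conv_image {E : (ℕ → V) → Prop} {E' : (ℕ → W) → Prop}
    (hE : ∀ g, E (fun n => φ (g n)) ↔ E' g) {A : ℕ → Set W}
    (hA : ∀ i, Disjoint (φ '' A i) (vBoundary H (Set.range φ))) :
    Conv H E (fun i => φ '' A i) ↔ Conv H' E' A := by
  unfold Conv
  have hv := fun i => vBoundary_image φ (hA i)
  simp only [hv, connected_image, ← Set.image_diff φ.injective,
    Set.image_subset_image_iff φ.injective, Set.finite_image_iff φ.injective.injOn]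
  have e1 : Function.Injective (fun i => φ '' A i) ↔ Function.Injective A :=
    ⟨fun h a b hab => h (by simp [hab]), fun h => φ.injective.image_injective.comp h⟩
  have e2 : ∀ i, (∃ f, E f ∧ Set.range f ⊆ φ '' A i) ↔ ∃ f, E' f ∧ Set.range f ⊆ A i := by
    intro i
    constructor
    · rintro ⟨f, hf, hfA⟩
      choose g hg hgf using fun n => hfA ⟨n, rfl⟩
      obtain rfl : (fun n => φ (g n)) = f := funext hgf
      refine ⟨g, (hE g).1 hf, ?_⟩
      rintro _ ⟨m, rfl⟩
      exact hg m
    · rintro ⟨g, hg, hgA⟩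
      refine ⟨fun n => φ (g n), (hE g).2 hg, ?_⟩
      rintro _ ⟨m, rfl⟩
      exact ⟨g m, hgA ⟨m, rfl⟩, rfl⟩
  rw [e1]
  simp only [e2]
  refine and_congr_right fun _ => and_congr_right fun _ => and_congr_right fun h => ?_
  exact forall_congr' fun i => minSep_image φ (hA i) ((h i).trans Set.diff_subset)

theorem iInf_conv_eq {E : (ℕ → V) → Prop} {E' : (ℕ → W) → Prop}
    (hB : (vBoundary H (Set.range φ)).Finite)
    (hE : ∀ g, E (fun n => φ (g n)) ↔ E' g)
    (hEt : ∀ g, E g → ∃ n, g n ∈ Set.range φ ∧ ∀ m, n ≤ m → g m ∈ Set.range φ) :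
    (⨅ A : {A : ℕ → Set W // Conv H' E' A}, Filter.atTop.liminf fun i => bratio H' (A.1 i)) =
      ⨅ A : {A : ℕ → Set V // Conv H E A}, Filter.atTop.liminf fun i => bratio H (A.1 i) := by
  apply le_antisymm
  · refine le_iInf fun ⟨A, hA⟩ => ?_
    obtain ⟨k, hk⟩ := hA.eventually_disjoint hB
    have hsub : ∀ i, φ '' (φ ⁻¹' A (i + k)) = A (i + k) := by
      intro i
      rw [Set.image_preimage_eq_iff]
      intro x hx
      obtain ⟨hc, -, g, hg, hgA⟩ := hA.2.1 (i + k)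
      obtain ⟨n, hn, -⟩ := hEt g hg
      obtain ⟨p⟩ := hc.preconnected ⟨g n, hgA ⟨n, rfl⟩⟩ ⟨x, hx⟩
      refine walk_stays H (Set.range φ) (p.map (SimpleGraph.Embedding.induce (A (i + k))).toHom)
        hn ?_ _ (SimpleGraph.Walk.end_mem_support _)
      intro z hz hzB
      rw [SimpleGraph.Walk.support_map, List.mem_map] at hz
      obtain ⟨y, -, rfl⟩ := hz
      exact Set.disjoint_left.1 (hk i) y.2 hzB
    have hd : ∀ i, Disjoint (φ '' (φ ⁻¹' A (i + k))) (vBoundary H (Set.range φ)) := by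
      intro i
      rw [hsub]
      exact hk i
    have hc : Conv H' E' (fun i => φ ⁻¹' A (i + k)) := by
      rw [← conv_image φ hE hd]
      simp only [hsub]
      exact hA.shift k
    refine (iInf_le _ ⟨_, hc⟩).trans (le_of_eq ?_)
    rw [← Filter.liminf_nat_add (fun i => bratio H (A i)) k]
    congr 1
    funext i
    simp only
    rw [← bratio_image φ (hd i), hsub]
  · refine le_iInf fun ⟨A, hA⟩ => ?_
    obtain ⟨k, hk⟩ := hA.eventually_disjoint (hB.preimage φ.injective.injOn)
    have hd : ∀ i, Disjoint (φ '' A (i + k)) (vBoundary H (Set.range φ)) := by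
      intro i
      rw [Set.disjoint_left]
      rintro _ ⟨x, hx, rfl⟩ h
      exact Set.disjoint_left.1 (hk i) hx h
    have hc : Conv H E (fun i => φ '' A (i + k)) := (conv_image φ hE hd).2 (hA.shift k)
    refine (iInf_le _ ⟨_, hc⟩).trans (le_of_eq ?_)
    rw [← Filter.liminf_nat_add (fun i => bratio H' (A i)) k]
    congr 1
    funext i
    exact bratio_image φ (hd i)

end Transfer

/-- if `G'` is an induced subgraph of `G` (on the vertex set `A`)
with finite vertex-boundary and the end of the ray `f` of `G'` contains rays of
the end of `r`, then the relative degrees of the two ends agree. -/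
theorem relDegree_eq_of_finite_boundary (G : SimpleGraph V) (r : ℕ → V)
    (hr : IsRay G r) (A : Set V) (hb : (vBoundary G A).Finite)
    (f : ℕ → A) (hf : IsRay (G.induce A) f)
    (hequiv : EquivRay G (fun n => (f n : V)) r) :
    relDegree (G.induce A) f = relDegree G r := by
  classical
  have hf' : IsRay G (fun n => (f n : V)) := hf.map (SimpleGraph.Embedding.induce A)
  have hdom : Subtype.val '' Dom (G.induce A) f = Dom G r := by
    rw [dom_induce hb]
    ext v
    exact ⟨dominates_of_equiv hf' hequiv, dominates_of_equiv hr hequiv.symm⟩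
  have hmem : ∀ x : A, x ∈ Dom (G.induce A) f ↔ (x : V) ∈ Dom G r := by
    intro x
    rw [← hdom, Subtype.val_injective.mem_set_image]
  have hcard : (Dom G r).encard = (Dom (G.induce A) f).encard := by
    rw [← hdom, Subtype.val_injective.encard_image]
  have hinf : (Dom (G.induce A) f).Infinite ↔ (Dom G r).Infinite := by
    rw [← hdom, Set.infinite_image_iff Subtype.val_injective.injOn]
  let φ : Gmin (G.induce A) f ↪g Gmin G r :=
    { toFun := fun x => ⟨(x.1 : V), fun h => x.2 ((hmem x.1).2 h)⟩
      inj' := by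
        intro x y h
        have h' : (x.1 : V) = (y.1 : V) :=
          congrArg (fun z : ((Dom G r)ᶜ : Set V) => (z : V)) h
        exact Subtype.ext (Subtype.ext h')
      map_rel_iff' := Iff.rfl }
  have hrange : ∀ x : ((Dom G r)ᶜ : Set V), x ∈ Set.range φ ↔ (x : V) ∈ A := by
    intro x
    constructor
    · rintro ⟨y, rfl⟩
      exact y.1.2
    · intro hx
      exact ⟨⟨⟨x.1, hx⟩, fun h => x.2 ((hmem _).1 h)⟩, rfl⟩
  have hB : (vBoundary (Gmin G r) (Set.range φ)).Finite := by
    refine (hb.preimage Subtype.val_injective.injOn).subset ?_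
    rintro x ⟨hx, y, hy, hxy⟩
    exact ⟨(hrange x).1 hx, y.1, fun h => hy ((hrange y).2 h), hxy⟩
  have hE : ∀ g, InDeletedEnd G r (fun n => φ (g n)) ↔ InDeletedEnd (G.induce A) f g := by
    intro g
    refine and_congr ⟨fun h => h.comap φ, fun h => h.map φ⟩ ⟨fun h => ?_, fun h => ?_⟩
    · have h1 : EquivRay G (fun n => (((g n).1 : A) : V)) (fun n => (f n : V)) :=
        EquivRay.trans hr h hequiv.symm
      intro S hS
      obtain ⟨a, b, p, hp⟩ := h1 (Subtype.val '' S ∪ vBoundary G A) ((hS.image _).union hb)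
      have hpA := walk_stays G A p (g a).1.2 (fun x hx hxB => hp x hx (Or.inr hxB))
      have := reach_comap (SimpleGraph.Embedding.induce (G := G) A) (S := Subtype.val '' S) p
        (fun z hz => ⟨⟨z, hpA z hz⟩, rfl⟩) (fun z hz hzS => hp z hz (Or.inl hzS))
        (g a).1 (f b) rfl rfl
      refine ⟨a, b, this.mono ?_⟩
      intro x hx
      exact ⟨x, hx, rfl⟩
    · refine EquivRay.trans (g := fun n => (f n : V)) hf' ?_ hequiv
      intro S hS
      obtain ⟨a, b, hab⟩ := h (Subtype.val ⁻¹' S) (hS.preimage Subtype.val_injective.injOn)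
      exact ⟨a, b, hab.map (SimpleGraph.Embedding.induce (G := G) A)⟩
  have hEt : ∀ g, InDeletedEnd G r g →
      ∃ n, g n ∈ Set.range φ ∧ ∀ m, n ≤ m → g m ∈ Set.range φ := by
    rintro g ⟨hg1, hg2⟩
    have hg : IsRay G (fun n => (g n : V)) := hg1.map (SimpleGraph.Embedding.induce _)
    obtain ⟨N, hN⟩ := hg.eventually_avoid hb
    obtain ⟨a, b, ha, -, h1⟩ := (EquivRay.trans hr hg2 hequiv.symm).tail hb N
    have : ∀ m, N ≤ m → g m ∈ Set.range φ := by
      intro m hm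
      rw [hrange]
      obtain ⟨p, hp⟩ := (hg.reach hN hm ha).trans h1
      exact walk_stays' G A p (f b).2 hp _ p.start_mem_support
    exact ⟨N, this N le_rfl, this⟩
  have hex : (∃ g, InDeletedEnd (G.induce A) f g) ↔ ∃ g, InDeletedEnd G r g := by
    constructor
    · rintro ⟨g, hg⟩
      exact ⟨_, (hE g).2 hg⟩
    · rintro ⟨g, hg⟩
      obtain ⟨N, -, hN⟩ := hEt g hg
      choose k hk using fun n => hN (n + N) (Nat.le_add_left N n)
      refine ⟨k, (hE k).1 ?_⟩
      simp only [hk]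
      exact ⟨hg.1.shift N, EquivRay.shift hg.2 N⟩
  have hI := iInf_conv_eq φ hB hE hEt
  unfold relDegree
  rw [hinf, hex, hcard]
  split_ifs
  · rfl
  · exact congrArg _ hI

end Paper
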